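/- arXiv:2104.01274 — 8 statements merged into one kernel-verified Lean document; each statement's English description precedes it below -/
import Mathlib

section
/- Let (c_1,…,c_n) be a quiddity cycle of length n ≥ 3 with sign ε, and let 2 ≤ i ≤ n−1 with c_i = 1. Then the sequence (c_1,…,c_{i−2},c_{i−1}−1,c_{i+1}−1,c_{i+2},…,c_n) of length n−1 is a quiddity cycle with the same sign ε. -/
/-- The continuant matrix `M(c)` for an integer `c`. -/
def M (c : ℤ) : Matrix (Fin 2) (Fin 2) ℤ := !![c, -1; 1, 0]

/-- `M(c₁,…,cₙ) := M(c₁)·…·M(cₙ)`. -/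
def Mseq (l : List ℤ) : Matrix (Fin 2) (Fin 2) ℤ := (l.map M).prod

/-- The continuant matrix `M(c)` for an element `c` of a ring; over `ℤ` it agrees with `M c`. -/
def continuantMatrix {R : Type*} [Ring R] (c : R) : Matrix (Fin 2) (Fin 2) R := !![c, -1; 1, 0]

/-- The product `M(c₁)·…·M(cₙ)` over a ring, taken in the order of the list: the invariant of
surgery. -/
def continuantProd {R : Type*} [Ring R] (l : List R) : Matrix (Fin 2) (Fin 2) R :=
  (l.map continuantMatrix).prod

section Ring

variable {R : Type*} [Ring R]

theorem continuantProd_append (l₁ l₂ : List R) :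
    continuantProd (l₁ ++ l₂) = continuantProd l₁ * continuantProd l₂ := by
  simp only [continuantProd, List.map_append, List.prod_append]

theorem continuantMatrix_mul_continuantMatrix_one_mul (p q : R) :
    continuantMatrix p * continuantMatrix 1 * continuantMatrix q =
      continuantMatrix (p - 1) * continuantMatrix (q - 1) :=
  calc
    continuantMatrix p * continuantMatrix 1 * continuantMatrix q
      = !![p - 1, -p; 1, -1] * continuantMatrix q := by
        simp [continuantMatrix, sub_eq_add_neg]
    _ = !![(p - 1) * q - p, -(p - 1); q - 1, -1] := by
        simp [continuantMatrix, sub_eq_add_neg]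
    _ = !![(p - 1) * (q - 1) - 1, -(p - 1); q - 1, -1] := by
        rw [show (p - 1) * q - p = (p - 1) * (q - 1) - 1 by noncomm_ring]
    _ = continuantMatrix (p - 1) * continuantMatrix (q - 1) := by
        simp [continuantMatrix, sub_eq_add_neg]

theorem continuantProd_triple_one (p q : R) :
    continuantProd [p, 1, q] = continuantProd [p - 1, q - 1] := by
  simpa [continuantProd, mul_assoc] using continuantMatrix_mul_continuantMatrix_one_mul p q

theorem surgery_one_general (u v : List R) (p q : R) :
    continuantProd (u ++ [p, 1, q] ++ v) = continuantProd (u ++ [p - 1, q - 1] ++ v) := by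
  simp only [continuantProd_append, continuantProd_triple_one]

end Ring

theorem Mseq_eq_continuantProd (l : List ℤ) : Mseq l = continuantProd l := rfl

/-- Surgery operation (a): if a quiddity cycle has an inner entry equal to `1`
(the sequence is `u ++ [p, 1, q] ++ v`, so the entry has index `i` with `2 ≤ i ≤ n−1`),
then removing it and decreasing both neighbours by one yields a quiddity cycle of
length `n−1` with the same sign. -/
theorem surgery_one (u v : List ℤ) (p q : ℤ) (ε : ℤ) (hε : ε = 1 ∨ ε = -1)
    (h : Mseq (u ++ [p, 1, q] ++ v) = ε • (1 : Matrix (Fin 2) (Fin 2) ℤ)) :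
    Mseq (u ++ [p - 1, q - 1] ++ v) = ε • (1 : Matrix (Fin 2) (Fin 2) ℤ) := by
  rw [Mseq_eq_continuantProd] at h ⊢
  rw [← surgery_one_general, h]
end

section
/- Let (c_1,…,c_n) be a quiddity cycle of length n ≥ 3 with sign ε, and let 2 ≤ i ≤ n−1 with c_i = −1. Then the sequence (c_1,…,c_{i−2},c_{i−1}+1,c_{i+1}+1,c_{i+2},…,c_n) of length n−1 is a quiddity cycle with sign −ε. -/
/- A product of continuant matrices can be rewritten locally: for `s = ±1` the block `M(p, s, q)`
equals `s • M(p - s, q - s)`, and the scalar `s` moves out of the whole product. Removing an entry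
`-1` is the case `s = -1`; the case `s = 1` is the classical surgery that cuts off an ear of a
triangulated polygon. -/

theorem Mseq_append (l₁ l₂ : List ℤ) : Mseq (l₁ ++ l₂) = Mseq l₁ * Mseq l₂ := by
  simp only [Mseq, List.map_append, List.prod_append]

theorem Mseq_triple_eq_smul {s : ℤ} (hs : s ^ 2 = 1) (p q : ℤ) :
    Mseq [p, s, q] = s • Mseq [p - s, q - s] := by
  have upper_left : p * (s * q - 1) - q = s * ((p - s) * (q - s) - 1) := by
    linear_combination (p + q - s) * hs
  have upper_right : 1 - p * s = s * (s - p) := by linear_combination - hs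
  have lower_left : s * q - 1 = s * (q - s) := by linear_combination hs
  calc
    Mseq [p, s, q] = !![p * (s * q - 1) - q, 1 - p * s; s * q - 1, -s] := by
      simp [Mseq, M, sub_eq_add_neg, add_comm]
    _ = s • !![(p - s) * (q - s) - 1, s - p; q - s, -1] := by
      rw [upper_left, upper_right, lower_left]
      simp
    _ = s • Mseq [p - s, q - s] := by simp [Mseq, M, sub_eq_add_neg]

theorem Mseq_append_triple_append {s : ℤ} (hs : s ^ 2 = 1) (u v : List ℤ) (p q : ℤ) :
    Mseq (u ++ [p, s, q] ++ v) = s • Mseq (u ++ [p - s, q - s] ++ v) := by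
  simp only [Mseq_append, Mseq_triple_eq_smul hs, mul_smul_comm, smul_mul_assoc]

theorem surgery_neg_one_general {s : ℤ} (hs : s ^ 2 = 1) (u v : List ℤ) (p q ε : ℤ)
    (h : Mseq (u ++ [p, s, q] ++ v) = ε • (1 : Matrix (Fin 2) (Fin 2) ℤ)) :
    Mseq (u ++ [p - s, q - s] ++ v) = (s * ε) • (1 : Matrix (Fin 2) (Fin 2) ℤ) := by
  calc
    Mseq (u ++ [p - s, q - s] ++ v) = s • s • Mseq (u ++ [p - s, q - s] ++ v) := by
      rw [smul_smul, ← sq, hs, one_smul]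
    _ = s • Mseq (u ++ [p, s, q] ++ v) := by rw [Mseq_append_triple_append hs]
    _ = (s * ε) • (1 : Matrix (Fin 2) (Fin 2) ℤ) := by rw [h, smul_smul]

/-- Surgery operation (b): if a quiddity cycle has an inner entry equal to `-1`
(the sequence is `u ++ [p, -1, q] ++ v`, so the entry has index `i` with `2 ≤ i ≤ n−1`),
then removing it and increasing both neighbours by one yields a quiddity cycle of
length `n−1` with the opposite sign. -/
theorem surgery_neg_one (u v : List ℤ) (p q : ℤ) (ε : ℤ) (hε : ε = 1 ∨ ε = -1)
    (h : Mseq (u ++ [p, -1, q] ++ v) = ε • (1 : Matrix (Fin 2) (Fin 2) ℤ)) :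
    Mseq (u ++ [p + 1, q + 1] ++ v) = (-ε) • (1 : Matrix (Fin 2) (Fin 2) ℤ) := by
  simpa only [sub_neg_eq_add, neg_one_mul] using
    surgery_neg_one_general neg_one_sq u v p q ε h
end

section
/- Let (c_1,…,c_n) be a quiddity cycle of length n ≥ 3 with sign ε, and let 2 ≤ i ≤ n−1 with c_i = 0. Then the sequence (c_1,…,c_{i−2},c_{i−1}+c_{i+1},c_{i+2},…,c_n) of length n−2 is a quiddity cycle with sign −ε. -/
/- Writing `M c = T ^ c * S` with `T = !![1, 1; 0, 1]` and `S = M 0`, this is `S * S = -1`. -/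
theorem M_mul_M_zero_mul_M (p q : ℤ) : M p * M 0 * M q = -M (p + q) := by
  simp [M]

theorem Mseq_zero_between (p q : ℤ) : Mseq [p, 0, q] = -Mseq [p + q] := by
  simpa [Mseq, mul_assoc] using M_mul_M_zero_mul_M p q

theorem Mseq_append_zero_between_append (u v : List ℤ) (p q : ℤ) :
    Mseq (u ++ [p, 0, q] ++ v) = -Mseq (u ++ [p + q] ++ v) := by
  simp only [Mseq_append, Mseq_zero_between, mul_neg, neg_mul]

/-- Surgery operation (c): if a quiddity cycle has an inner entry equal to `0`
(the sequence is `u ++ [p, 0, q] ++ v`, so the entry has index `i` with `2 ≤ i ≤ n−1`),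
then removing it and merging the two neighbours into their sum yields a quiddity cycle
of length `n−2` with the opposite sign. -/
theorem surgery_zero (u v : List ℤ) (p q : ℤ) (ε : ℤ) (hε : ε = 1 ∨ ε = -1)
    (h : Mseq (u ++ [p, 0, q] ++ v) = ε • (1 : Matrix (Fin 2) (Fin 2) ℤ)) :
    Mseq (u ++ [p + q] ++ v) = (-ε) • (1 : Matrix (Fin 2) (Fin 2) ℤ) := by
  rw [neg_smul, ← h, Mseq_append_zero_between_append, neg_neg]
end

section
/- Let a, c be coprime integers with c > 0. Then there exist a natural number k ≥ 1 and unique integers q_1,…,q_k and r_1,…,r_{k−1} satisfying q_i ≥ 2 for all i ∈ {2,…,k}, 0 < r_i < r_{i−1} for all i ∈ {1,…,k−1} (where r_0 := c), and the recurrences a = q_1·c − r_1, c = q_2·r_1 − r_2, r_{i−2} = q_i·r_{i−1} − r_i for 3 ≤ i ≤ k−1, and r_{k−2} = q_k·r_{k−1}; moreover a/c = [[q_1,…,q_k]]. -/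
/-- The negative continued fraction `[[q₁,…,q_k]]` of a list of integers,
defined by `[[q_k]] = q_k` and `[[q_i,…,q_k]] = q_i − 1/[[q_{i+1},…,q_k]]`. -/
def ncf : List ℤ → ℚ
  | [] => 0
  | [q] => (q : ℚ)
  | q :: l => (q : ℚ) - 1 / ncf l

/-- The system of equations of the negative euclidean algorithm for `a` and `c`:
writing `q = [q₁,…,q_k]` and `r = [r₁,…,r_{k−1}]`, and setting `r₀ := c` and `r_k := 0`,
we require `k ≥ 1`, `qᵢ ≥ 2` for `2 ≤ i ≤ k`, `0 < rᵢ < r_{i−1}` for `1 ≤ i ≤ k−1`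
(together with `r_{k-1} > 0`, i.e. the chain `c > r₁ > … > r_{k−1} > 0`), and the
recurrences `a = q₁·c − r₁`, `c = q₂·r₁ − r₂`, `r_{i−2} = qᵢ·r_{i−1} − rᵢ`,
`r_{k−2} = q_k·r_{k−1} − 0`. -/
def NegEuclid (a c : ℤ) (q r : List ℤ) : Prop :=
  1 ≤ q.length ∧ r.length + 1 = q.length ∧
  (∀ i, 1 ≤ i → i < q.length → 2 ≤ q.getD i 0) ∧
  List.Chain' (· > ·) (c :: (r ++ [0])) ∧
  (∀ i < q.length,
    (a :: c :: (r ++ [0])).getD i 0 =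
      q.getD i 0 * (a :: c :: (r ++ [0])).getD (i + 1) 0
        - (a :: c :: (r ++ [0])).getD (i + 2) 0)

/-!
Rounding up instead of down, `a = p * c - x` with `0 ≤ x < c` determines `p = ⌈a / c⌉` and `x`.
If `x = 0` the algorithm stops, and otherwise it continues with `(c, x)`; since `x < c`, this
recursion terminates, and `a / c = p - 1 / (c / x)` turns it into the continued fraction.
The bound `2 ≤ qᵢ` for `2 ≤ i` holds because the `i`-th division has dividend larger than divisor.
-/

section Division

variable {a c p x : ℤ}

theorem neg_neg_ediv_neg_emod_unique (hc : 0 < c) :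
    -(-a / c) = p ∧ -a % c = x ↔ a = p * c - x ∧ 0 ≤ x ∧ x < c := by
  have hp : -(-a / c) = p ↔ -a / c = -p := neg_eq_iff_eq_neg
  have ha : a = p * c - x ↔ x + c * -p = -a := by
    constructor <;> intro h <;> linarith
  rw [hp, ha, Int.ediv_emod_unique hc]

theorem two_le_of_eq_mul_sub (hx : 0 ≤ x) (hc : 0 < c) (hca : c < a) (h : a = p * c - x) :
    2 ≤ p := by
  have : 1 * c < p * c := by linarith
  exact lt_of_mul_lt_mul_right this hc.le

end Division

theorem ncf_cons_of_ne_nil {q : List ℤ} (hq : q ≠ []) (p : ℤ) :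
    ncf (p :: q) = p - 1 / ncf q := by
  rw [ncf]
  exact hq

namespace NegEuclid

variable {a c p x : ℤ} {q q' r r' : List ℤ}

theorem nil_right_iff :
    NegEuclid a c q [] ↔ ∃ p, q = [p] ∧ 0 < c ∧ a = p * c := by
  constructor
  · rintro ⟨-, hlen, -, hchain, hrec⟩
    obtain ⟨p, rfl⟩ := List.length_eq_one_iff.1 hlen.symm
    exact ⟨p, rfl, (List.isChain_cons_cons.1 hchain).1, by simpa using hrec 0⟩
  · rintro ⟨p, rfl, hc, rfl⟩
    refine ⟨by simp, by simp, fun i hi hi' ↦ ?_, List.isChain_pair.2 hc, fun i hi ↦ ?_⟩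
    · exact absurd hi' hi.not_gt
    · obtain rfl : i = 0 := by simpa using hi
      simp

theorem ne_nil (h : NegEuclid a c q r) : q ≠ [] :=
  List.length_pos_iff.1 h.1

theorem pos (h : NegEuclid a c q r) : 0 < c :=
  h.2.2.2.1.rel_cons (by simp)

theorem exists_of_cons (h : NegEuclid a c q (x :: r)) :
    ∃ p q', q = p :: q' ∧ a = p * c - x ∧ x < c ∧ NegEuclid c x q' r := by
  obtain ⟨-, hlen, htwo, hchain, hrec⟩ := h
  obtain ⟨p, q', rfl⟩ := List.exists_cons_of_length_eq_add_one hlen.symm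
  obtain ⟨hxc, hchain'⟩ := List.isChain_cons_cons.1 hchain
  simp only [List.length_cons, add_left_inj] at hlen htwo hrec
  exact ⟨p, q', rfl, by simpa using hrec 0, hxc, by omega, hlen,
    fun i hi hi' ↦ by simpa using htwo (i + 1) (by omega) (by omega), hchain',
    fun i hi ↦ by simpa using hrec (i + 1) (by omega)⟩

theorem eq_headD_mul_sub_headD (h : NegEuclid a c q r) :
    a = q.headD 0 * c - r.headD 0 ∧ 0 ≤ r.headD 0 ∧ r.headD 0 < c := by
  cases r with
  | nil =>
    obtain ⟨p, rfl, hc, rfl⟩ := nil_right_iff.1 h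
    simpa using hc
  | cons x r =>
    obtain ⟨p, q, rfl, ha, hxc, htail⟩ := h.exists_of_cons
    exact ⟨ha, htail.pos.le, hxc⟩

theorem headD_unique (h : NegEuclid a c q r) (h' : NegEuclid a c q' r') :
    q'.headD 0 = q.headD 0 ∧ r'.headD 0 = r.headD 0 := by
  obtain ⟨hq, hr⟩ := (neg_neg_ediv_neg_emod_unique h.pos).2 h.eq_headD_mul_sub_headD
  obtain ⟨hq', hr'⟩ := (neg_neg_ediv_neg_emod_unique h.pos).2 h'.eq_headD_mul_sub_headD
  exact ⟨hq'.symm.trans hq, hr'.symm.trans hr⟩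

theorem two_le_getD (h : NegEuclid a c q r) (hca : c < a) {i : ℕ} (hi : i < q.length) :
    2 ≤ q.getD i 0 := by
  rcases i with _ | i
  · obtain ⟨ha, hx, -⟩ := h.eq_headD_mul_sub_headD
    simpa [List.head?_eq_getElem?] using two_le_of_eq_mul_sub hx h.pos hca ha
  · exact h.2.2.1 (i + 1) (by omega) hi

theorem cons (h : NegEuclid c x q r) (hxc : x < c) (ha : a = p * c - x) :
    NegEuclid a c (p :: q) (x :: r) := by
  refine ⟨by simp, by simpa using h.2.1, fun i hi hi' ↦ ?_, h.2.2.2.1.cons_cons hxc,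
    fun i hi ↦ ?_⟩
  · obtain ⟨i, rfl⟩ := Nat.exists_eq_add_of_le' hi
    simpa using h.two_le_getD hxc (by simpa using hi')
  · rcases i with _ | i
    · simpa using ha
    · simpa using h.2.2.2.2 i (by simpa using hi)

theorem ncf_eq (h : NegEuclid a c q r) : ncf q = (a : ℚ) / c := by
  have hc : (c : ℚ) ≠ 0 := by exact_mod_cast h.pos.ne'
  induction r generalizing a c q with
  | nil =>
    obtain ⟨p, rfl, -, rfl⟩ := nil_right_iff.1 h
    simp [ncf, hc]
  | cons x r ih =>
    obtain ⟨p, q, rfl, rfl, -, htail⟩ := h.exists_of_cons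
    have hx : (x : ℚ) ≠ 0 := by exact_mod_cast htail.pos.ne'
    calc ncf (p :: q) = p - 1 / (c / x) := by rw [ncf_cons_of_ne_nil htail.ne_nil, ih htail hx]
      _ = ((p * c - x : ℤ) : ℚ) / c := by push_cast; field_simp

theorem unique (h : NegEuclid a c q r) (h' : NegEuclid a c q' r') : q' = q ∧ r' = r := by
  induction r generalizing a c q q' r' with
  | nil =>
    obtain ⟨hq, hr⟩ := h.headD_unique h'
    obtain ⟨p, rfl, -⟩ := nil_right_iff.1 h
    cases r' with
    | nil =>
      obtain ⟨p', rfl, -⟩ := nil_right_iff.1 h'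
      simpa using hq
    | cons y r' =>
      obtain ⟨_, _, -, -, -, htail'⟩ := h'.exists_of_cons
      exact absurd hr htail'.pos.ne'
  | cons x r ih =>
    obtain ⟨hq, hr⟩ := h.headD_unique h'
    obtain ⟨p, q, rfl, -, -, htail⟩ := h.exists_of_cons
    cases r' with
    | nil => exact absurd hr htail.pos.ne
    | cons y r' =>
      obtain ⟨p', q', rfl, -, -, htail'⟩ := h'.exists_of_cons
      obtain rfl : p' = p := hq
      obtain rfl : y = x := hr
      obtain ⟨rfl, rfl⟩ := ih htail htail'
      exact ⟨rfl, rfl⟩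

end NegEuclid

theorem exists_negEuclid (a : ℤ) {c : ℤ} (hc : 0 < c) : ∃ q r, NegEuclid a c q r := by
  obtain ⟨ha, hx, hxc⟩ := (neg_neg_ediv_neg_emod_unique (a := a) hc).1 ⟨rfl, rfl⟩
  rcases hx.eq_or_lt with hx | hx
  · exact ⟨_, _, NegEuclid.nil_right_iff.2 ⟨_, rfl, hc, by rwa [← hx, sub_zero] at ha⟩⟩
  · obtain ⟨q, r, h⟩ := exists_negEuclid c hx
    exact ⟨_, _, h.cons hxc ha⟩
termination_by c.toNat
decreasing_by omega

theorem negEuclid_exists_unique_general (a c : ℤ) (hc : 0 < c) :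
    ∃ q r : List ℤ, NegEuclid a c q r ∧ ncf q = (a : ℚ) / (c : ℚ) ∧
      ∀ q' r' : List ℤ, NegEuclid a c q' r' → q' = q ∧ r' = r := by
  obtain ⟨q, r, h⟩ := exists_negEuclid a hc
  exact ⟨q, r, h, h.ncf_eq, fun _ _ h' ↦ h.unique h'⟩

/-- Negative euclidean algorithm: for coprime integers `a` and `c > 0` there exist
unique integers `q₁,…,q_k` and `r₁,…,r_{k−1}` (with `k ≥ 1`) satisfying the system of
equations above, and moreover `a/c = [[q₁,…,q_k]]`. -/
theorem negEuclid_exists_unique (a c : ℤ) (hc : 0 < c) (h : IsCoprime a c) :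
    ∃ q r : List ℤ, NegEuclid a c q r ∧ ncf q = (a : ℚ) / (c : ℚ) ∧
      ∀ q' r' : List ℤ, NegEuclid a c q' r' → q' = q ∧ r' = r := by
  exact negEuclid_exists_unique_general a c hc
end

section
/- Every rational number q can be written in exactly one way as a negative continued fraction q = [[d_1,…,d_k]] with d_1 ∈ ℤ and d_i ≥ 2 for all i ∈ {2,…,k}. -/
/-!
If `d₂, …, d_k ≥ 2`, then `[[d₂,…,d_k]] > 1`, so `q = [[d₁,…,d_k]]` lies in `(d₁ - 1, d₁]` and
`d₁ = ⌈q⌉` is forced. When `q` is an integer the expansion stops there; otherwise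
`[[d₂,…,d_k]] = (⌈q⌉ - q)⁻¹` is forced as well, which gives uniqueness. Conversely
`(⌈q⌉ - q)⁻¹ > 1` has a smaller denominator than `q`, so iterating `q ↦ (⌈q⌉ - q)⁻¹` terminates,
and every partial quotient after the first is the ceiling of a number greater than `1`.
-/

theorem forall_getD_cons_iff {α : Type*} {p : α → Prop} {a b : α} {l : List α} :
    (∀ i, 1 ≤ i → i < (a :: l).length → p ((a :: l).getD i b)) ↔ ∀ x ∈ l, p x := by
  rw [List.forall_mem_iff_forall_getElem]
  constructor
  · intro h i hi
    simpa [hi] using h (i + 1) (by lia) (by simpa using hi)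
  · rintro h (_ | i) hpos hi
    · lia
    · have hi' : i < l.length := by simpa using hi
      simpa [hi'] using h i hi'

theorem den_inv_lt_den {x : ℚ} (hx₀ : 0 < x) (hx₁ : x < 1) : x⁻¹.den < x.den := by
  rw [Rat.den_inv_of_ne_zero hx₀.ne']
  have hnum_pos : 0 < x.num := Rat.num_pos.mpr hx₀
  have hnum_lt : x.num < x.den := Rat.num_lt_denom_iff.mpr hx₁
  lia

-- For `l = []` this relies on `ncf [] = 0` and `0⁻¹ = 0`.
theorem ncf_cons (a : ℤ) (l : List ℤ) : ncf (a :: l) = a - (ncf l)⁻¹ := by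
  cases l <;> simp [ncf]

theorem one_lt_ncf_cons {a : ℤ} {l : List ℤ} (ha : 2 ≤ a) (hl : ∀ x ∈ l, 2 ≤ x) :
    1 < ncf (a :: l) := by
  have ha' : (2 : ℚ) ≤ a := mod_cast ha
  induction l generalizing a with
  | nil => simp only [ncf]; linarith
  | cons b l ih =>
    obtain ⟨hb, hl⟩ := List.forall_mem_cons.mp hl
    have hinv : (ncf (b :: l))⁻¹ < 1 := inv_lt_one_of_one_lt₀ (ih hb hl (mod_cast hb))
    rw [ncf_cons]
    linarith

theorem inv_ncf_mem_Ico {l : List ℤ} (hl : ∀ x ∈ l, 2 ≤ x) : (ncf l)⁻¹ ∈ Set.Ico 0 1 := by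
  cases l with
  | nil => simp [ncf]
  | cons a l =>
    obtain ⟨ha, hl⟩ := List.forall_mem_cons.mp hl
    have hlt : 1 < ncf (a :: l) := one_lt_ncf_cons ha hl
    exact ⟨by positivity, inv_lt_one_of_one_lt₀ hlt⟩

theorem ceil_ncf_cons {l : List ℤ} (a : ℤ) (hl : ∀ x ∈ l, 2 ≤ x) : ⌈ncf (a :: l)⌉ = a := by
  obtain ⟨hnonneg, hlt⟩ := inv_ncf_mem_Ico hl
  rw [ncf_cons, Int.ceil_eq_iff]
  constructor <;> linarith

theorem eq_and_ncf_eq_of_ncf_cons_eq {a b : ℤ} {l m : List ℤ} (hl : ∀ x ∈ l, 2 ≤ x)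
    (hm : ∀ x ∈ m, 2 ≤ x) (h : ncf (a :: l) = ncf (b :: m)) : a = b ∧ ncf l = ncf m := by
  have hab : a = b := by rw [← ceil_ncf_cons a hl, h, ceil_ncf_cons b hm]
  refine ⟨hab, ?_⟩
  rwa [ncf_cons, ncf_cons, hab, sub_right_inj, inv_inj] at h

theorem ncf_injOn : Set.InjOn ncf {l | ∀ x ∈ l, 2 ≤ x} := by
  intro l hl m hm h
  induction l generalizing m with
  | nil =>
    cases m with
    | nil => rfl
    | cons b m =>
      obtain ⟨hb, hm⟩ := List.forall_mem_cons.mp hm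
      exact absurd h (zero_lt_one.trans (one_lt_ncf_cons hb hm)).ne
  | cons a l ih =>
    obtain ⟨ha, hl⟩ := List.forall_mem_cons.mp hl
    cases m with
    | nil => exact absurd h (zero_lt_one.trans (one_lt_ncf_cons ha hl)).ne'
    | cons b m =>
      have hm' : ∀ x ∈ m, 2 ≤ x := List.forall_mem_of_forall_mem_cons hm
      obtain ⟨rfl, htail⟩ := eq_and_ncf_eq_of_ncf_cons_eq hl hm' h
      rw [ih hl hm' htail]

theorem ncf_cons_inj {a b : ℤ} {l m : List ℤ} (hl : ∀ x ∈ l, 2 ≤ x) (hm : ∀ x ∈ m, 2 ≤ x) :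
    ncf (a :: l) = ncf (b :: m) ↔ a = b ∧ l = m := by
  refine ⟨fun h ↦ ?_, by rintro ⟨rfl, rfl⟩; rfl⟩
  exact (eq_and_ncf_eq_of_ncf_cons_eq hl hm h).imp_right (ncf_injOn hl hm)

theorem exists_ncf_ceil_cons_eq (q : ℚ) :
    ∃ l : List ℤ, (∀ x ∈ l, 2 ≤ x) ∧ ncf (⌈q⌉ :: l) = q := by
  induction hn : q.den using Nat.strong_induction_on generalizing q with
  | _ n ih =>
    subst hn
    obtain hint | hpos := (sub_nonneg.mpr (Int.le_ceil q)).eq_or_lt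
    · exact ⟨[], List.forall_mem_nil _, sub_eq_zero.mp hint.symm⟩
    · have hlt : ⌈q⌉ - q < 1 := by linarith [Int.ceil_lt_add_one q]
      have hden : (⌈q⌉ - q)⁻¹.den < q.den := by
        simpa only [Rat.intCast_sub_den] using den_inv_lt_den hpos hlt
      obtain ⟨l, hl, hval⟩ := ih _ hden _ rfl
      have hceil : 1 < ⌈(⌈q⌉ - q)⁻¹⌉ :=
        Int.lt_ceil.mpr (mod_cast (one_lt_inv₀ hpos).mpr hlt)
      refine ⟨⌈(⌈q⌉ - q)⁻¹⌉ :: l, List.forall_mem_cons.mpr ⟨hceil, hl⟩, ?_⟩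
      rw [ncf_cons, hval, inv_inv, sub_sub_cancel]

/-- Every rational number `q` can be written in exactly one way as a negative continued
fraction `q = [[d₁,…,d_k]]` with `d₁ ∈ ℤ` and `dᵢ ≥ 2` for all `i ∈ {2,…,k}`. -/
theorem ncf_existsUnique (q : ℚ) :
    ∃! d : List ℤ, d ≠ [] ∧ (∀ i, 1 ≤ i → i < d.length → 2 ≤ d.getD i 0) ∧ ncf d = q := by
  obtain ⟨l, hl, hq⟩ := exists_ncf_ceil_cons_eq q
  refine ⟨⌈q⌉ :: l, ⟨List.cons_ne_nil _ _, forall_getD_cons_iff.mpr hl, hq⟩, ?_⟩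
  rintro (_ | ⟨a, m⟩) ⟨hne, hm, haq⟩
  · exact absurd rfl hne
  · obtain ⟨rfl, rfl⟩ := (ncf_cons_inj (forall_getD_cons_iff.mp hm) hl).mp (haq.trans hq.symm)
    rfl
end

section
/- Let A be a matrix in SL(2,ℤ) with entries a, b (top row) and c, d (bottom row), such that |a| > 1, c ≠ 0, and a and c have the same sign (a·c > 0). Then ⌈b/a⌉ = ⌈d/c⌉, where ⌈·⌉ denotes the ceiling of the rational quotient. -/
/-!
When `0 < a` and `0 ≤ a * d - b * c < a`, the number `b * c / a = d - (a * d - b * c) / a` rounds up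
to `d`. Rounding up before dividing by a positive integer `c` does not change the ceiling of the
quotient, so `⌈b / a⌉ = ⌈(b * c / a) / c⌉ = ⌈d / c⌉`. If `a` and `c` are negative, negating all four
entries changes neither the quotients nor the determinant, which in `SL(2, ℤ)` is `1 < |a|`.
-/

section

variable {K : Type*} [Field K] [LinearOrder K] [IsStrictOrderedRing K] [FloorRing K]

theorem ceil_ceil_div_intCast_of_nonneg (x : K) {n : ℤ} (hn : 0 ≤ n) :
    ⌈(⌈x⌉ : K) / n⌉ = ⌈x / n⌉ := by
  rw [← neg_inj, ← Int.floor_neg, ← Int.floor_neg, ← neg_div, ← neg_div,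
    Int.floor_div_cast_of_nonneg hn, Int.floor_div_cast_of_nonneg hn, ← Int.cast_neg,
    Int.floor_intCast, Int.floor_neg]

theorem ceil_div_eq_iff {a x : K} (ha : 0 < a) {n : ℤ} :
    ⌈x / a⌉ = n ↔ 0 ≤ a * n - x ∧ a * n - x < a := by
  rw [Int.ceil_eq_iff, lt_div_iff₀ ha, div_le_iff₀ ha, sub_one_mul, sub_lt_comm, sub_nonneg,
    mul_comm a, and_comm]

theorem ceil_div_eq_ceil_div_of_pos {a b : K} {c d : ℤ} (ha : 0 < a) (hc : 0 < c)
    (hdet_nonneg : 0 ≤ a * d - b * c) (hdet_lt : a * d - b * c < a) :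
    ⌈b / a⌉ = ⌈(d : K) / c⌉ := by
  have hcK : (c : K) ≠ 0 := Int.cast_ne_zero.mpr hc.ne'
  have hd : ⌈b * c / a⌉ = d := (ceil_div_eq_iff ha).mpr ⟨hdet_nonneg, hdet_lt⟩
  calc ⌈b / a⌉ = ⌈b * c / a / c⌉ := by rw [div_right_comm, mul_div_cancel_right₀ b hcK]
    _ = ⌈(⌈b * c / a⌉ : K) / c⌉ := (ceil_ceil_div_intCast_of_nonneg _ hc.le).symm
    _ = ⌈(d : K) / c⌉ := by rw [hd]

theorem ceil_eq_of_sl2_general (a b : K) (c d : ℤ) (hdet_nonneg : 0 ≤ a * d - b * c)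
    (hdet_lt : a * d - b * c < |a|) (hsign : 0 < a * c) :
    ⌈b / a⌉ = ⌈(d : K) / c⌉ := by
  rcases mul_pos_iff.mp hsign with ⟨ha, hc⟩ | ⟨ha, hc⟩
  · rw [abs_of_pos ha] at hdet_lt
    exact ceil_div_eq_ceil_div_of_pos ha (Int.cast_pos.mp hc) hdet_nonneg hdet_lt
  · rw [abs_of_neg ha] at hdet_lt
    have hneg : ⌈-b / -a⌉ = ⌈((-d : ℤ) : K) / (-c : ℤ)⌉ :=
      ceil_div_eq_ceil_div_of_pos (neg_pos.mpr ha) (neg_pos.mpr (Int.cast_lt_zero.mp hc))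
        (by simpa only [Int.cast_neg, neg_mul_neg] using hdet_nonneg)
        (by simpa only [Int.cast_neg, neg_mul_neg] using hdet_lt)
    simpa only [Int.cast_neg, neg_div_neg_eq] using hneg

end

/-- Let `A = !![a, b; c, d]` be an integer matrix of determinant `1` with `|a| > 1`,
`c ≠ 0` and `a·c > 0`. Then `⌈b/a⌉ = ⌈d/c⌉`. -/
theorem ceil_eq_of_sl2 (a b c d : ℤ) (hdet : a * d - b * c = 1)
    (ha : 1 < |a|) (hc : c ≠ 0) (hsign : 0 < a * c) :
    ⌈(b : ℚ) / (a : ℚ)⌉ = ⌈(d : ℚ) / (c : ℚ)⌉ := by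
  have hdet' : (a * d - b * c : ℚ) = 1 := mod_cast hdet
  exact ceil_eq_of_sl2_general _ _ c d (by simp [hdet']) (hdet' ▸ mod_cast ha) (mod_cast hsign)
end

section
/- For all integers a, b and every natural number k, the following identities hold: (1) M(a)·(M(2))^k·M(b) = −M(a−1)·M(−(k+1))·M(b−1); (2) M(a)·(M(−2))^k·M(b) = (−1)^k·M(a+1)·M(k+1)·M(b+1); and (3) for every integer k ≥ 1, M(a)·M(−k) = M(a+1)·(M(2))^{k−1}·M(1)·M(0). -/
/-!
In a product of matrices `M c`, a factor `M 1` is absorbed by lowering both neighbouring entries by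
one, and a factor `M (-1)` by raising them, at the cost of a sign. Read backwards, the second
relation inserts `M (-1)` between `M a` and `M b`, lowering `a` and `b`. If `b = 2`, then `M b` has
become `M 1`, which the first relation absorbs, turning the inserted `-1` into `-2`; every further
factor `M 2` lowers it by one more. Powers of `M (-2)` are treated dually. The third identity
comes from the first one at `b = 1` on multiplying by `M 0`, whose square is `-1`.
-/

theorem M_zero_mul_M_zero : M 0 * M 0 = -1 := by
  simp [M, Matrix.one_fin_two]

theorem M_mul_M_one_mul_M (a b : ℤ) : M a * M 1 * M b = M (a - 1) * M (b - 1) := by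
  simp only [M, Matrix.mul_fin_two]
  ring_nf

theorem M_mul_M_neg_one_mul_M (a b : ℤ) :
    M a * M (-1) * M b = -(M (a + 1) * M (b + 1)) := by
  simp only [M, Matrix.mul_fin_two, Matrix.neg_of, Matrix.neg_cons, Matrix.neg_empty]
  ring_nf

theorem M_mul_M_two_pow_mul_M (a b : ℤ) (k : ℕ) :
    M a * M 2 ^ k * M b = -(M (a - 1) * M (-((k : ℤ) + 1)) * M (b - 1)) := by
  induction k generalizing b with
  | zero => simp [M_mul_M_neg_one_mul_M]
  | succ k ih =>
    calc M a * M 2 ^ (k + 1) * M b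
        = M a * M 2 ^ k * M 2 * M b := by simp only [pow_succ, mul_assoc]
      _ = -(M (a - 1) * (M (-((k : ℤ) + 1)) * M 1 * M b)) := by
        rw [ih, show (2 : ℤ) - 1 = 1 by norm_num]
        simp only [neg_mul, mul_assoc]
      _ = -(M (a - 1) * M (-(((k + 1 : ℕ) : ℤ) + 1)) * M (b - 1)) := by
        rw [M_mul_M_one_mul_M, ← mul_assoc, Nat.cast_succ, ← neg_add']

theorem M_mul_M_neg_two_pow_mul_M (a b : ℤ) (k : ℕ) :
    M a * M (-2) ^ k * M b = (-1 : ℤ) ^ k • (M (a + 1) * M ((k : ℤ) + 1) * M (b + 1)) := by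
  induction k generalizing b with
  | zero => simp [M_mul_M_one_mul_M]
  | succ k ih =>
    calc M a * M (-2) ^ (k + 1) * M b
        = M a * M (-2) ^ k * M (-2) * M b := by simp only [pow_succ, mul_assoc]
      _ = (-1 : ℤ) ^ k • (M (a + 1) * (M ((k : ℤ) + 1) * M (-1) * M b)) := by
        rw [ih, show (-2 : ℤ) + 1 = -1 by norm_num]
        simp only [smul_mul_assoc, mul_assoc]
      _ = (-1 : ℤ) ^ (k + 1) • (M (a + 1) * M (((k + 1 : ℕ) : ℤ) + 1) * M (b + 1)) := by
        rw [M_mul_M_neg_one_mul_M, mul_neg, ← mul_assoc, pow_succ, mul_neg_one, neg_smul, smul_neg,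
          Nat.cast_succ]

theorem M_mul_M_neg_succ (a : ℤ) (n : ℕ) :
    M a * M (-((n : ℤ) + 1)) = M (a + 1) * M 2 ^ n * M 1 * M 0 := by
  rw [M_mul_M_two_pow_mul_M, add_sub_cancel_right, sub_self, neg_mul, mul_assoc _ (M 0),
    M_zero_mul_M_zero, mul_neg_one, neg_neg]

/-- The identities
`M(a)·(M(2))^k·M(b) = −M(a−1)·M(−(k+1))·M(b−1)`,
`M(a)·(M(−2))^k·M(b) = (−1)^k·M(a+1)·M(k+1)·M(b+1)` (for natural `k`), and
`M(a)·M(−k) = M(a+1)·(M(2))^{k−1}·M(1)·M(0)` for every integer `k ≥ 1`. -/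
theorem power_identities (a b : ℤ) (k : ℕ) :
    M a * (M 2) ^ k * M b = -(M (a - 1) * M (-((k : ℤ) + 1)) * M (b - 1)) ∧
    M a * (M (-2)) ^ k * M b = ((-1 : ℤ) ^ k) • (M (a + 1) * M ((k : ℤ) + 1) * M (b + 1)) ∧
    ∀ k' : ℤ, 1 ≤ k' → M a * M (-k') = M (a + 1) * (M 2) ^ (k' - 1).toNat * M 1 * M 0 := by
  refine ⟨M_mul_M_two_pow_mul_M a b k, M_mul_M_neg_two_pow_mul_M a b k, fun k' hk' => ?_⟩
  have hcast : ((k' - 1).toNat : ℤ) + 1 = k' := by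
    rw [Int.toNat_of_nonneg (sub_nonneg.mpr hk'), sub_add_cancel]
  rw [← M_mul_M_neg_succ, hcast]
end

section
/- For all integers a, b and every natural number l, there exist ε, ε' ∈ {1,−1} such that M(a)·M(2)·(M(3))^l·M(2)·M(b) = ε·M(a−1)·(M(−3))^{l+1}·M(b−1) and M(a)·M(−2)·(M(−3))^l·M(−2)·M(b) = ε'·M(a+1)·(M(3))^{l+1}·M(b+1). -/
/-!
Blowing down, `M(c) M(u) M(d) = u • M(c - u) M(d - u)` for a sign `u`, is the only matrix
computation needed. A blow-up of sign `u` followed by a blow-down of sign `-u` flips an entry `2u`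
to `-2u`, shifting both neighbours by `-u`. Flipping the last `2u` of the chain
`2u, 3u, …, 3u, 2u` turns its left neighbour `3u` into `2u`, which closes a shorter chain;
replacing that chain by induction shifts `-2u` to `-3u`.
-/

theorem M_mul_unit_mul (u : ℤˣ) (c d : ℤ) :
    M c * M u * M d = u • (M (c - u) * M (d - u)) := by
  rcases Int.units_eq_one_or u with rfl | rfl <;>
    ext i j <;> fin_cases i <;> fin_cases j <;> simp [M, Units.smul_def] <;> ring

theorem M_mul_two_mul (u : ℤˣ) (c d : ℤ) :
    M c * M (2 * u) * M d = -(M (c - u) * M (-2 * u) * M (d - u)) := by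
  have blow_up : M (c - u) * M (-2 * u) = u • (M c * M u * M (-u)) := by
    rw [M_mul_unit_mul, smul_smul, Int.units_mul_self, one_smul]
    ring_nf
  have blow_down : M u * M (-u) * M (d - u) = -u • (M (2 * u) * M d) := by
    rw [← Units.val_neg, M_mul_unit_mul]
    push_cast
    ring_nf
  calc
    M c * M (2 * u) * M d = -(u • (M c * (-u • (M (2 * u) * M d)))) := by
      simp [Units.neg_smul, smul_smul, mul_assoc]
    _ = -(u • (M c * M u * M (-u)) * M (d - u)) := by
      rw [← blow_down]; simp only [mul_assoc, smul_mul_assoc]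
    _ = -(M (c - u) * M (-2 * u) * M (d - u)) := by rw [blow_up]

theorem M_mul_two_two_mul (u : ℤˣ) (c d : ℤ) :
    M c * M (2 * u) * M (2 * u) * M d = -u • (M (c - u) * M (-3 * u) * M (d - u)) := by
  calc
    M c * M (2 * u) * M (2 * u) * M d = -(M (c - u) * (M (-2 * u) * M u * M d)) := by
      rw [M_mul_two_mul, show 2 * (u : ℤ) - u = u by ring]
      simp only [neg_mul, mul_assoc]
    _ = -u • (M (c - u) * M (-3 * u) * M (d - u)) := by
      rw [M_mul_unit_mul, show -2 * (u : ℤ) - u = -3 * u by ring]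
      simp only [mul_smul_comm, mul_assoc, Units.neg_smul]

theorem M_mul_two_three_pow_two_mul (u : ℤˣ) (a b : ℤ) (l : ℕ) :
    M a * M (2 * u) * M (3 * u) ^ l * M (2 * u) * M b =
      ((-1) ^ (l + 1) * u) • (M (a - u) * M (-3 * u) ^ (l + 1) * M (b - u)) := by
  induction l generalizing b with
  | zero => simpa using M_mul_two_two_mul u a b
  | succ l ih =>
    calc
      M a * M (2 * u) * M (3 * u) ^ (l + 1) * M (2 * u) * M b
          = M a * M (2 * u) * M (3 * u) ^ l * (M (3 * u) * M (2 * u) * M b) := by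
        simp only [pow_succ, mul_assoc]
      _ = -(M a * M (2 * u) * M (3 * u) ^ l * M (2 * u) * M (-2 * u) * M (b - u)) := by
        rw [M_mul_two_mul, show 3 * (u : ℤ) - u = 2 * u by ring]
        simp only [mul_neg, mul_assoc]
      _ = -(((-1) ^ (l + 1) * u) • (M (a - u) * M (-3 * u) ^ (l + 1) * M (-3 * u)) *
            M (b - u)) := by
        rw [ih, show -2 * (u : ℤ) - u = -3 * u by ring]
      _ = ((-1) ^ (l + 2) * u) • (M (a - u) * M (-3 * u) ^ (l + 2) * M (b - u)) := by
        rw [pow_succ (-1 : ℤˣ) (l + 1), pow_succ (M _) (l + 1)]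
        simp only [mul_neg_one, neg_mul, Units.neg_smul, smul_mul_assoc, mul_assoc]

/-- There are signs `ε, ε' ∈ {1,−1}` with
`M(a)·M(2)·(M(3))^l·M(2)·M(b) = ε·M(a−1)·(M(−3))^{l+1}·M(b−1)` and
`M(a)·M(−2)·(M(−3))^l·M(−2)·M(b) = ε'·M(a+1)·(M(3))^{l+1}·M(b+1)`. -/
theorem surgery_232 (a b : ℤ) (l : ℕ) :
    ∃ ε ε' : ℤ, (ε = 1 ∨ ε = -1) ∧ (ε' = 1 ∨ ε' = -1) ∧
      M a * M 2 * (M 3) ^ l * M 2 * M b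
        = ε • (M (a - 1) * (M (-3)) ^ (l + 1) * M (b - 1)) ∧
      M a * M (-2) * (M (-3)) ^ l * M (-2) * M b
        = ε' • (M (a + 1) * (M 3) ^ (l + 1) * M (b + 1)) := by
  refine ⟨((-1) ^ (l + 1) * 1 : ℤˣ), ((-1) ^ (l + 1) * (-1) : ℤˣ),
    Int.isUnit_iff.mp (Units.isUnit _), Int.isUnit_iff.mp (Units.isUnit _), ?_, ?_⟩
  · simpa [Units.smul_def] using M_mul_two_three_pow_two_mul 1 a b l
  · simpa [Units.smul_def] using M_mul_two_three_pow_two_mul (-1) a b l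
end
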